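/- For a partition λ of N and an n-dimensional vector space V over a field of characteristic 0: if λ has at most n rows then the GL(V)-module S_λ V = V^{⊗N} · c_λ is nonzero and irreducible, and if λ has more than n rows then S_λ V = 0. -/

import Mathlib

open scoped TensorProduct

section Schur

variable (K : Type*) [Field K] (V : Type*) [AddCommGroup V] [Module K V]
variable (N : ℕ) (μ : ℕ → ℕ)

/-- The cells of the Young diagram of the partition `μ` of `N` (row `i` has `μ i` boxes;
since `μ` is a partition of `N`, all cells `(i,j)`, `j < μ i`, satisfy `i, j < N`). -/
abbrev YCells : Type := {p : Fin N × Fin N // (p.2 : ℕ) < μ (p.1 : ℕ)}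

/-- The tensor power `V^{⊗N}`, with tensor factors indexed by the cells of `μ`. -/
abbrev TPow : Type _ := ⨂[K] (_ : YCells N μ), V

variable {V}

/-- The action of a permutation of the cells on `V^{⊗N}` by permuting the tensor factors. -/
noncomputable def permMapC (σ : Equiv.Perm (YCells N μ)) : TPow K V N μ →ₗ[K] TPow K V N μ :=
  (PiTensorProduct.reindex K (fun _ : YCells N μ => V) σ).toLinearMap

/-- The diagonal action of `g : V → V` on `V^{⊗N}`. -/
noncomputable def tmapC (g : V →ₗ[K] V) : TPow K V N μ →ₗ[K] TPow K V N μ :=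
  PiTensorProduct.map (fun _ : YCells N μ => g)

/-- The row symmetrizer `a_μ = ∑_{σ ∈ R(μ)} σ`, summing over the permutations preserving
each row of the Young tableau. -/
noncomputable def rowSymm : TPow K V N μ →ₗ[K] TPow K V N μ :=
  ∑ σ ∈ Finset.univ.filter (fun σ : Equiv.Perm (YCells N μ) => ∀ x, ((σ x).1.1 = x.1.1)),
    permMapC K N μ σ

/-- The column antisymmetrizer `b_μ = ∑_{σ ∈ C(μ)} sgn(σ)·σ`, summing over the permutations
preserving each column of the Young tableau. -/
noncomputable def colAntisymm : TPow K V N μ →ₗ[K] TPow K V N μ :=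
  ∑ σ ∈ Finset.univ.filter (fun σ : Equiv.Perm (YCells N μ) => ∀ x, ((σ x).1.2 = x.1.2)),
    ((Equiv.Perm.sign σ : ℤ) : K) • permMapC K N μ σ

/-- The Young symmetrizer `c_μ = a_μ ∘ b_μ` of the partition `μ`. -/
noncomputable def youngSymm : TPow K V N μ →ₗ[K] TPow K V N μ :=
  rowSymm K N μ ∘ₗ colAntisymm K N μ

/-- The Schur module `S_μ V = V^{⊗N} · c_μ`. -/
noncomputable def schurMod : Submodule K (TPow K V N μ) :=
  LinearMap.range (youngSymm K N μ)

end Schur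

/-!
Let `e` be the Young symmetrizer in the group algebra `K𝔖_N`. Every permutation is either a product
of a row and a column permutation, or conjugates a row transposition to a column transposition. So
an element that is row invariant on the left and column alternating on the right is a multiple of
`e`; in particular `e * z * e ∈ K e` for all `z`. A trace computation gives `e * e ≠ 0`.

Averaging an endomorphism of `V^{⊗N}` over conjugation by `𝔖_N` yields a combination of the maps
`g^{⊗N}` with `g ∈ GL(V)`: polarize to reach `g ∈ End V`, then use that `GL(V)` is Zariski dense.
A `GL(V)`-stable subspace `W` of `S_λ V` is therefore stable under these averages. For a rank one
map `ξ ⊗ s` with `s ∈ S_λ V`, applying `e` to the average at `w ∈ W` gives `ξ (e² w) • s`, which is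
a nonzero multiple of `s` when `ξ w ≠ 0`; hence `W` is zero or everything.

If `λ` has at most `n` rows, `e` does not kill the tensor with a basis vector `b i` at each cell of
row `i`. If it has more, the first column forces a repeated basis vector in each basic tensor, and
the column antisymmetrizer is zero.
-/

namespace SchurModule

section GroupAlgebra

open MonoidAlgebra

variable {R G : Type*} [CommRing R] [Group G]

theorem coeff_mul_one_comm (x y : MonoidAlgebra R G) : (x * y).coeff 1 = (y * x).coeff 1 := by
  rw [coeff_mul_apply_left, coeff_mul_apply_right]
  exact Finsupp.sum_congr fun g _ => by simp [mul_comm]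

theorem sum_coeff_one_mul_single_mul [Fintype G] (x y : MonoidAlgebra R G) :
    ∑ g : G, (x * single g 1 * y).coeff 1 • single g⁻¹ (1 : R) = y * x := by
  have coeff_inv (g : G) : (x * single g 1 * y).coeff 1 = (y * x).coeff g⁻¹ := by
    rw [coeff_mul_one_comm, ← mul_assoc, coeff_mul_single_apply, one_mul, mul_one]
  simp only [coeff_inv]
  refine (Equiv.sum_comp (Equiv.inv G) fun g => (y * x).coeff g • single g (1 : R)).trans ?_
  ext g
  simp [coeff_sum]

theorem trace_mulLeft [Fintype G] (x : MonoidAlgebra R G) :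
    LinearMap.trace R _ (LinearMap.mulLeft R x) = Fintype.card G * x.coeff 1 := by
  classical
  have diag_eq (g : G) : LinearMap.toMatrix (MonoidAlgebra.basis G R) (MonoidAlgebra.basis G R)
      (LinearMap.mulLeft R x) g g = x.coeff 1 := by
    rw [LinearMap.toMatrix_apply]
    simp [MonoidAlgebra.basis, coeffLinearEquiv]
  simp only [LinearMap.trace_eq_matrix_trace R (MonoidAlgebra.basis G R), Matrix.trace,
    Matrix.diag_apply, diag_eq, Finset.sum_const, Finset.card_univ, nsmul_eq_mul]

theorem coeff_one_eq_zero_of_isNilpotent {K : Type*} [Field K] [CharZero K] [Finite G]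
    {x : MonoidAlgebra K G} (hx : IsNilpotent x) : x.coeff 1 = 0 := by
  have := Fintype.ofFinite G
  have htrace := (LinearMap.isNilpotent_trace_of_isNilpotent
    (hx.map (Algebra.lmul K (MonoidAlgebra K G)))).eq_zero
  have hcard : (Fintype.card G : K) * x.coeff 1 = 0 := (trace_mulLeft x).symm.trans htrace
  exact (mul_eq_zero.1 hcard).resolve_left (Nat.cast_ne_zero.2 Fintype.card_ne_zero)

end GroupAlgebra

section SignedSum

open MonoidAlgebra

variable {R G : Type*} [CommRing R] [Group G] {χ ψ : G →* ℤˣ} {H L : Subgroup G}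

variable (R) in
open scoped Classical in
/-- The element `∑ h ∈ H, χ h • h` of the group algebra: the symmetrizer of `H` for `χ = 1`, and its
antisymmetrizer when `χ` is the sign of permutations. -/
noncomputable def signedSum [Fintype G] (χ : G →* ℤˣ) (H : Subgroup G) : MonoidAlgebra R G :=
  ∑ h : H, χ h • single (h : G) 1

theorem single_mul_signedSum [Fintype G] {h : G} (hh : h ∈ H) :
    single h 1 * signedSum R χ H = χ h • signedSum R χ H := by
  classical
  rw [signedSum, Finset.mul_sum, Finset.smul_sum]
  refine Fintype.sum_equiv (Equiv.mulLeft ⟨h, hh⟩) _ _ fun k => ?_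
  simp [smul_smul, ← mul_assoc, Int.units_mul_self]

theorem signedSum_mul_single [Fintype G] {h : G} (hh : h ∈ H) :
    signedSum R χ H * single h 1 = χ h • signedSum R χ H := by
  classical
  rw [signedSum, Finset.sum_mul, Finset.smul_sum]
  refine Fintype.sum_equiv (Equiv.mulRight ⟨h, hh⟩) _ _ fun k => ?_
  simp [smul_smul, mul_comm (χ k), ← mul_assoc, Int.units_mul_self]

theorem asAlgebraHom_signedSum [Fintype G] {T : Type*} [AddCommGroup T] [Module R T]
    (ρ : Representation R G T) [DecidablePred (· ∈ H)] :
    ρ.asAlgebraHom (signedSum R χ H) = ∑ g with g ∈ H, ((χ g : ℤ) : R) • ρ g := by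
  classical
  rw [signedSum, map_sum, Finset.sum_subtype (p := (· ∈ H)) (F := Fintype.ofFinite H) _ (by simp)]
  refine Finset.sum_congr (by ext; simp) fun h _ => ?_
  rw [Units.smul_def, map_zsmul, ρ.asAlgebraHom_single_one, Int.cast_smul_eq_zsmul]

theorem coeff_one_signedSum_mul_signedSum [Fintype G] (hHL : Disjoint H L) :
    (signedSum R χ H * signedSum R ψ L).coeff 1 = 1 := by
  classical
  have mul_eq_one (k : H × L) : (k.1 : G) * k.2 = 1 ↔ k = 1 := by
    refine ⟨fun h => ?_, fun h => by simp [h]⟩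
    obtain ⟨h₁, h₂⟩ := Subgroup.disjoint_iff_mul_eq_one.1 hHL k.1.2 k.2.2 h
    exact Prod.ext (Subtype.ext h₁) (Subtype.ext h₂)
  rw [signedSum, signedSum, Finset.sum_mul_sum, ← Fintype.sum_prod_type', coeff_sum,
    Finsupp.finsetSum_apply, Fintype.sum_eq_single 1]
  · simp
  · intro k hk
    simp [mul_eq_one, hk]

theorem eq_zero_of_coeff_one_eq_zero [IsAddTorsionFree R]
    (hHL : ∀ g, (∃ h ∈ H, ∃ l ∈ L, g = h * l) ∨ ∃ h ∈ H, ∃ l ∈ L, h * g = g * l ∧ χ h ≠ ψ l)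
    {z : MonoidAlgebra R G} (hleft : ∀ h ∈ H, single h 1 * z = χ h • z)
    (hright : ∀ l ∈ L, z * single l 1 = ψ l • z) (hz : z.coeff 1 = 0) : z = 0 := by
  have coeff_left {h : G} (hh : h ∈ H) (g : G) : z.coeff g = χ h • z.coeff (h * g) := by
    simpa using congrArg (fun x => x.coeff (h * g)) (hleft h hh)
  have coeff_right {l : G} (hl : l ∈ L) (g : G) : z.coeff g = ψ l • z.coeff (g * l) := by
    simpa using congrArg (fun x => x.coeff (g * l)) (hright l hl)
  ext g
  rcases hHL g with ⟨h, hh, l, hl, rfl⟩ | ⟨h, hh, l, hl, hcomm, hne⟩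
  · have hl_zero : z.coeff l = 0 :=
      (smul_eq_zero_iff_eq (ψ l)).1 (by simpa [hz] using (coeff_right hl 1).symm)
    exact (smul_eq_zero_iff_eq (χ h)).1 ((coeff_left hh l).symm.trans hl_zero)
  · have hneg : z.coeff g = -z.coeff g := by
      conv_lhs => rw [coeff_left hh, hcomm, Int.units_ne_iff_eq_neg.1 hne, Units.neg_smul]
      rw [← coeff_right hl]
    exact self_eq_neg.1 hneg

theorem eq_coeff_one_smul_signedSum_mul_signedSum [Fintype G] [IsAddTorsionFree R]
    (hdisj : Disjoint H L)
    (hHL : ∀ g, (∃ h ∈ H, ∃ l ∈ L, g = h * l) ∨ ∃ h ∈ H, ∃ l ∈ L, h * g = g * l ∧ χ h ≠ ψ l)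
    {z : MonoidAlgebra R G} (hleft : ∀ h ∈ H, single h 1 * z = χ h • z)
    (hright : ∀ l ∈ L, z * single l 1 = ψ l • z) :
    z = z.coeff 1 • (signedSum R χ H * signedSum R ψ L) := by
  refine sub_eq_zero.1 (eq_zero_of_coeff_one_eq_zero hHL (fun h hh => ?_) (fun l hl => ?_) ?_)
  · rw [mul_sub, hleft h hh, mul_smul_comm, ← mul_assoc, single_mul_signedSum hh, smul_mul_assoc,
      smul_comm, smul_sub]
  · rw [sub_mul, hright l hl, smul_mul_assoc, mul_assoc, signedSum_mul_single hl, mul_smul_comm,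
      smul_comm, smul_sub]
  · simp [coeff_one_signedSum_mul_signedSum hdisj]

end SignedSum

section Irreducibility

open MonoidAlgebra

variable {G T : Type*} [Group G] [Fintype G] [AddCommGroup T]

theorem asAlgebraHom_sum_conj_smulRight {R : Type*} [CommRing R] [Module R T]
    (ρ : Representation R G T) {e : MonoidAlgebra R G}
    (hsandwich : ∀ z, e * z * e = (e * z * e).coeff 1 • e)
    (ξ : Module.Dual R T) (w : T) {s : T} (hs : s ∈ LinearMap.range (ρ.asAlgebraHom e)) :
    ρ.asAlgebraHom e (∑ g, ρ g (ξ.smulRight s (ρ g⁻¹ w))) =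
      ξ (ρ.asAlgebraHom (e * e) w) • s := by
  obtain ⟨u, rfl⟩ := hs
  have sandwich_apply (g : G) : ρ.asAlgebraHom e (ρ g (ρ.asAlgebraHom e u)) =
      (e * single g 1 * e).coeff 1 • ρ.asAlgebraHom e u := by
    rw [← ρ.asAlgebraHom_single_one g, ← Module.End.mul_apply, ← Module.End.mul_apply, ← map_mul,
      ← map_mul, ← LinearMap.smul_apply, ← map_smul, ← hsandwich]
  rw [← sum_coeff_one_mul_single_mul]
  simp only [map_sum, map_smul, LinearMap.smulRight_apply, sandwich_apply, LinearMap.sum_apply,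
    LinearMap.smul_apply, ρ.asAlgebraHom_single_one, Finset.sum_smul, smul_smul, smul_eq_mul,
    mul_comm]

theorem eq_bot_or_eq_range_asAlgebraHom {K : Type*} [Field K] [CharZero K] [Module K T]
    (ρ : Representation K G T) {e : MonoidAlgebra K G} (hone : e.coeff 1 = 1)
    (hsandwich : ∀ z, e * z * e = (e * z * e).coeff 1 • e)
    {W : Submodule K T} (hWle : W ≤ LinearMap.range (ρ.asAlgebraHom e))
    (hW : ∀ f : Module.End K T, ∀ w ∈ W, ∑ g, ρ g (f (ρ g⁻¹ w)) ∈ W) :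
    W = ⊥ ∨ W = LinearMap.range (ρ.asAlgebraHom e) := by
  refine or_iff_not_imp_left.2 fun hbot => hWle.antisymm fun s hs => ?_
  obtain ⟨w, hw, hw0⟩ := W.exists_mem_ne_zero_of_ne_bot hbot
  obtain ⟨ξ, hξ⟩ := Module.Projective.exists_dual_ne_zero K hw0
  obtain ⟨m, hm⟩ : ∃ m : K, e * e = m • e := ⟨_, by simpa using hsandwich 1⟩
  have hm0 : m ≠ 0 := by
    rintro rfl
    have := coeff_one_eq_zero_of_isNilpotent (x := e) ⟨2, by rw [pow_two, hm, zero_smul]⟩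
    exact one_ne_zero (hone.symm.trans this)
  have apply_of_mem {x : T} (hx : x ∈ W) : ρ.asAlgebraHom e x = m • x := by
    obtain ⟨u, rfl⟩ := hWle hx
    rw [← Module.End.mul_apply, ← map_mul, hm, map_smul, LinearMap.smul_apply]
  have havg := hW (ξ.smulRight s) w hw
  have hsmul : (m * m * ξ w) • s ∈ W := by
    have hs' := asAlgebraHom_sum_conj_smulRight ρ hsandwich ξ w hs
    rw [apply_of_mem havg, hm, map_smul, LinearMap.smul_apply, apply_of_mem hw, map_smul, map_smul,
      smul_eq_mul, smul_eq_mul, ← mul_assoc] at hs'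
    exact hs' ▸ W.smul_mem m havg
  exact (W.smul_mem_iff (by simp [hm0, hξ])).1 hsmul

end Irreducibility

section Tableau

open MonoidAlgebra Equiv Finset

variable {X ι κ : Type*}

/-- The permutations preserving every fibre of `f`; for `f` the row (column) of a cell this is the
row (column) stabilizer of a tableau. -/
def fiberStabilizer (f : X → ι) : Subgroup (Perm X) where
  carrier := {σ | ∀ x, f (σ x) = f x}
  mul_mem' hσ hτ x := (hσ _).trans (hτ x)
  one_mem' _ := rfl
  inv_mem' {σ} hσ x := by simpa using (hσ (σ⁻¹ x)).symm

theorem mem_fiberStabilizer {f : X → ι} {σ : Perm X} :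
    σ ∈ fiberStabilizer f ↔ ∀ x, f (σ x) = f x :=
  Iff.rfl

theorem swap_mem_fiberStabilizer [DecidableEq X] {f : X → ι} {x y : X} (hxy : f x = f y) :
    swap x y ∈ fiberStabilizer f := by
  intro z
  rw [swap_apply_def]
  split_ifs with hx hy
  · rw [hx, hxy]
  · rw [hy, hxy]
  · rfl

theorem disjoint_fiberStabilizer {r : X → ι} {c : X → κ}
    (hinj : Function.Injective fun x => (r x, c x)) :
    Disjoint (fiberStabilizer r) (fiberStabilizer c) :=
  Subgroup.disjoint_def.2 fun hr hc => Equiv.ext fun x => hinj (Prod.ext (hr x) (hc x))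

theorem card_filter_lt_le_card_filter_lt {s : Finset X} {a b : X → ℕ} (ha : Set.InjOn a s)
    (hb : ∀ x ∈ s, ∀ i < b x, ∃ y ∈ s, b y = i) (j : ℕ) :
    #{x ∈ s | a x < j} ≤ #{x ∈ s | b x < j} := by
  by_cases hall : ∀ x ∈ s, b x < j
  · rw [filter_true_of_mem hall]
    exact card_filter_le _ _
  · push Not at hall
    obtain ⟨x, hx, hjx⟩ := hall
    calc #{x ∈ s | a x < j}
      _ ≤ #(range j) := card_le_card_of_injOn a (fun y hy => by simp_all)
          (ha.mono fun y hy => by simp_all)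
      _ ≤ #{x ∈ s | b x < j} := card_le_card_of_surjOn b fun i hi => by
          have hij : i < j := by simpa using hi
          obtain ⟨y, hy, rfl⟩ := hb x hx i (hij.trans_le hjx)
          exact ⟨y, by simp [hy, hij], rfl⟩

variable {r : X → ι} {c : X → ℕ}

/-- If `c (h x)` exceeded all columns of the row of `x`, then `c ∘ h` would take values below
`c (h x)` fewer times than `c` does. -/
theorem exists_row_eq_and_col_eq [Finite X] (hlow : ∀ x, ∀ j < c x, ∃ y, r y = r x ∧ c y = j)
    {h : Perm X} (hh : ∀ x y, r x = r y → c (h x) = c (h y) → x = y) (x : X) :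
    ∃ y, r y = r x ∧ c y = c (h x) := by
  classical
  have := Fintype.ofFinite X
  by_contra! hnone
  have row_lt {y : X} (hy : r y = r x) : c y < c (h x) := by
    by_contra! hle
    rcases hle.eq_or_lt with heq | hlt
    · exact hnone y hy heq.symm
    · obtain ⟨z, hz, hz'⟩ := hlow y _ hlt
      exact hnone z (hz.trans hy) hz'
  have row_le (i : ι) : #{y ∈ {y | r y = i} | c (h y) < c (h x)} ≤
      #{y ∈ {y | r y = i} | c y < c (h x)} := by
    refine card_filter_lt_le_card_filter_lt (a := fun y => c (h y)) (fun y hy z hz hyz => ?_)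
      (fun y hy j hj => ?_) _
    · exact hh y z (by simp_all) hyz
    · obtain ⟨z, hz, hz'⟩ := hlow y j hj
      exact ⟨z, by simp_all, hz'⟩
  have row_x_lt : #{y ∈ {y | r y = r x} | c (h y) < c (h x)} <
      #{y ∈ {y | r y = r x} | c y < c (h x)} := by
    refine card_lt_card (ssubset_iff_of_subset (fun y hy => ?_) |>.2 ⟨x, ?_, ?_⟩)
    · simp_all
    · simp_all
    · simp
  have hcard : #{y | c (h y) < c (h x)} = #{y | c y < c (h x)} :=
    card_equiv h fun y => by simp
  rw [card_eq_sum_card_fiberwise (f := r) (t := univ.image r) (by simp [Set.MapsTo]),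
    card_eq_sum_card_fiberwise (f := r) (t := univ.image r) (by simp [Set.MapsTo])] at hcard
  simp only [filter_comm (p := fun _ => _ < c (h x))] at hcard
  exact (sum_lt_sum (fun i _ => row_le i) ⟨r x, by simp, row_x_lt⟩).ne hcard

theorem exists_mem_fiberStabilizer_col_eq [Finite X]
    (hlow : ∀ x, ∀ j < c x, ∃ y, r y = r x ∧ c y = j)
    {h : Perm X} (hh : ∀ x y, r x = r y → c (h x) = c (h y) → x = y) :
    ∃ p ∈ fiberStabilizer r, ∀ x, c (p x) = c (h x) := by
  choose p hpr hpc using exists_row_eq_and_col_eq hlow hh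
  have hp : Function.Injective p := fun x y hxy =>
    hh x y (by rw [← hpr, hxy, hpr]) (by rw [← hpc, hxy, hpc])
  exact ⟨Equiv.ofBijective p (Finite.injective_iff_bijective.1 hp), hpr, hpc⟩

theorem exists_eq_mul_or_exists_mul_eq_mul [Fintype X] [DecidableEq X]
    (hlow : ∀ x, ∀ j < c x, ∃ y, r y = r x ∧ c y = j) (g : Perm X) :
    (∃ p ∈ fiberStabilizer r, ∃ q ∈ fiberStabilizer c, g = p * q) ∨
      ∃ p ∈ fiberStabilizer r, ∃ q ∈ fiberStabilizer c,
        p * g = g * q ∧ (1 : Perm X →* ℤˣ) p ≠ Perm.sign q := by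
  by_cases hg : ∀ x y, r x = r y → c (g⁻¹ x) = c (g⁻¹ y) → x = y
  · obtain ⟨p, hp, hpc⟩ := exists_mem_fiberStabilizer_col_eq hlow hg
    exact .inl ⟨p⁻¹, inv_mem hp, p * g, fun x => by simp [hpc], by simp⟩
  · push Not at hg
    obtain ⟨x, y, hr, hc, hxy⟩ := hg
    refine .inr ⟨swap x y, swap_mem_fiberStabilizer hr, swap (g⁻¹ x) (g⁻¹ y),
      swap_mem_fiberStabilizer hc, ?_, ?_⟩
    · simp [mul_swap_eq_swap_mul]
    · rw [MonoidHom.one_apply, Perm.sign_swap (by simpa using hxy)]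
      decide

variable {R : Type*} [CommRing R] [Fintype X] [DecidableEq X]

variable (R) in
/-- The Young symmetrizer, in the group algebra of the permutations of the cells `X`, of the tableau
whose cell `x` lies in row `r x` and column `c x`. -/
noncomputable def youngSymmetrizer (r : X → ι) (c : X → κ) : MonoidAlgebra R (Perm X) :=
  signedSum R 1 (fiberStabilizer r) * signedSum R Perm.sign (fiberStabilizer c)

theorem coeff_one_youngSymmetrizer {c : X → κ} (hinj : Function.Injective fun x => (r x, c x)) :
    (youngSymmetrizer R r c).coeff 1 = 1 :=
  coeff_one_signedSum_mul_signedSum (disjoint_fiberStabilizer hinj)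

theorem single_mul_youngSymmetrizer {c : X → κ} {p : Perm X} (hp : p ∈ fiberStabilizer r) :
    single p 1 * youngSymmetrizer R r c = youngSymmetrizer R r c := by
  rw [youngSymmetrizer, ← mul_assoc, single_mul_signedSum hp, MonoidHom.one_apply, one_smul]

theorem youngSymmetrizer_mul_single {c : X → κ} {q : Perm X} (hq : q ∈ fiberStabilizer c) :
    youngSymmetrizer R r c * single q 1 = Perm.sign q • youngSymmetrizer R r c := by
  rw [youngSymmetrizer, mul_assoc, signedSum_mul_single hq, mul_smul_comm]

theorem coeff_youngSymmetrizer_of_mem_fiberStabilizer {c : X → κ}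
    (hinj : Function.Injective fun x => (r x, c x)) {p : Perm X} (hp : p ∈ fiberStabilizer r) :
    (youngSymmetrizer R r c).coeff p = 1 := by
  rw [← single_mul_youngSymmetrizer hp, coeff_single_mul_apply, inv_mul_cancel, one_mul,
    coeff_one_youngSymmetrizer hinj]

theorem youngSymmetrizer_mul_mul_youngSymmetrizer [IsAddTorsionFree R]
    (hinj : Function.Injective fun x => (r x, c x))
    (hlow : ∀ x, ∀ j < c x, ∃ y, r y = r x ∧ c y = j) (z : MonoidAlgebra R (Perm X)) :
    youngSymmetrizer R r c * z * youngSymmetrizer R r c =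
      (youngSymmetrizer R r c * z * youngSymmetrizer R r c).coeff 1 • youngSymmetrizer R r c := by
  refine eq_coeff_one_smul_signedSum_mul_signedSum (disjoint_fiberStabilizer hinj)
    (exists_eq_mul_or_exists_mul_eq_mul hlow) (fun p hp => ?_) (fun q hq => ?_)
  · rw [← mul_assoc, ← mul_assoc, single_mul_youngSymmetrizer hp, MonoidHom.one_apply, one_smul]
  · rw [mul_assoc, youngSymmetrizer_mul_single hq, mul_smul_comm]

end Tableau

section Multilinear

open Finset

variable {ι : Type*}

theorem sum_perm_map_comp [Fintype ι] [DecidableEq ι] {R A E : Type*} [CommRing R]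
    [AddCommGroup A] [Module R A] [AddCommGroup E] [Module R E]
    (M : MultilinearMap R (fun _ : ι => A) E) (a : ι → A) :
    ∑ σ : Equiv.Perm ι, M (fun x => a (σ x)) =
      ∑ t : Finset ι, (-1 : ℤ) ^ #t • M fun _ => ∑ j ∈ tᶜ, a j := by
  let missing (j : ι) : Finset (ι → ι) := {f | ∀ x, f x ≠ j}
  have sum_perm : ∑ σ : Equiv.Perm ι, M (fun x => a (σ x)) =
      ∑ f ∈ univ.inf fun j => (missing j)ᶜ, M fun x => a (f x) := by
    refine sum_bij (fun σ _ => σ) (fun σ _ => ?_) (fun _ _ _ _ h => Equiv.coe_fn_injective h)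
      (fun f hf => ?_) fun _ _ => rfl
    · simpa [mem_inf, missing, Function.Surjective] using σ.surjective
    · have hsurj : Function.Surjective f := by
        simpa [mem_inf, missing, Function.Surjective] using hf
      exact ⟨.ofBijective f (Finite.surjective_iff_bijective.1 hsurj), mem_univ _, rfl⟩
  have sum_missing (t : Finset ι) :
      ∑ f ∈ t.inf missing, M (fun x => a (f x)) = M fun _ => ∑ j ∈ tᶜ, a j := by
    rw [M.map_sum_finset (fun _ => a)]
    refine sum_congr ?_ fun _ _ => rfl
    ext f
    simp only [mem_inf, missing, mem_filter, mem_univ, true_and, Fintype.mem_piFinset, mem_compl]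
    exact ⟨fun h x hx => h _ hx x rfl, fun h j hj x hx => h x (hx ▸ hj)⟩
  rw [sum_perm, inclusion_exclusion_sum_inf_compl, powerset_univ]
  simp only [sum_missing]

open Polynomial in
theorem exists_eval_eq_map_smul_add [Finite ι] {R A : Type*} [CommRing R] [AddCommGroup A]
    [Module R A] (M : MultilinearMap R (fun _ : ι => A) R) (a b : A) :
    ∃ p : R[X], ∀ t, p.eval t = M fun _ => t • a + b := by
  classical
  have := Fintype.ofFinite ι
  refine ⟨∑ s : Finset ι, C (M (s.piecewise (fun _ => a) fun _ => b)) * X ^ #s, fun t => ?_⟩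
  rw [eval_finsetSum]
  refine ((M.map_add_univ (fun _ => t • a) fun _ => b).trans (sum_congr rfl fun s _ => ?_)).symm
  have hsmul := M.map_piecewise_smul (fun _ => t) (s.piecewise (fun _ => a) fun _ => b) s
  have hpiecewise : s.piecewise (fun x => t • s.piecewise (fun _ => a) (fun _ => b) x)
      (s.piecewise (fun _ => a) fun _ => b) = s.piecewise (fun _ => t • a) fun _ => b := by
    ext x
    by_cases hx : x ∈ s <;> simp [hx]
  rw [hpiecewise] at hsmul
  rw [eval_mul, eval_C, eval_pow, eval_X, mul_comm]
  exact hsmul.trans (by rw [prod_const, smul_eq_mul])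

variable {K V E : Type*} [Field K] [Infinite K] [AddCommGroup V] [Module K V]
  [FiniteDimensional K V] [AddCommGroup E] [Module K E]

/-- Invertible maps are Zariski dense: `t • 1 + h` is singular only at the roots of a characteristic
polynomial. -/
theorem map_const_eq_zero_of_forall_linearEquiv [Finite ι]
    (M : MultilinearMap K (fun _ : ι => Module.End K V) K)
    (hM : ∀ g : V ≃ₗ[K] V, M (fun _ => g.toLinearMap) = 0) (h : Module.End K V) :
    M (fun _ => h) = 0 := by
  obtain ⟨p, hp⟩ := exists_eval_eq_map_smul_add M 1 h
  have hmul : p * (-h).charpoly = 0 := by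
    refine Polynomial.funext fun t => ?_
    rw [Polynomial.eval_mul, Polynomial.eval_zero, mul_eq_zero, or_iff_not_imp_right, hp,
      LinearMap.eval_charpoly, sub_neg_eq_add, Algebra.algebraMap_eq_smul_one]
    exact fun hdet => hM (LinearMap.equivOfDetNeZero _ hdet)
  have hp_zero : p = 0 :=
    (mul_eq_zero.1 hmul).resolve_right (LinearMap.charpoly_monic _).ne_zero
  simpa [hp_zero] using (hp 0).symm

theorem map_const_mem_of_forall_linearEquiv [Finite ι]
    (M : MultilinearMap K (fun _ : ι => Module.End K V) E) {W : Submodule K E}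
    (hW : ∀ g : V ≃ₗ[K] V, M (fun _ => g.toLinearMap) ∈ W) (h : Module.End K V) :
    M (fun _ => h) ∈ W := by
  by_contra hh
  obtain ⟨ψ, hψ, hψW⟩ := Submodule.exists_le_ker_of_notMem hh
  exact hψ (map_const_eq_zero_of_forall_linearEquiv (ψ.compMultilinearMap M)
    (fun g => hψW (hW g)) h)

theorem sum_perm_map_comp_mem [Fintype ι] [DecidableEq ι]
    (M : MultilinearMap K (fun _ : ι => Module.End K V) E) {W : Submodule K E}
    (hW : ∀ g : V ≃ₗ[K] V, M (fun _ => g.toLinearMap) ∈ W) (a : ι → Module.End K V) :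
    ∑ σ : Equiv.Perm ι, M (fun x => a (σ x)) ∈ W := by
  rw [sum_perm_map_comp]
  exact sum_mem fun t _ => W.smul_of_tower_mem _ (map_const_mem_of_forall_linearEquiv M hW _)

end Multilinear

section TensorPower

open PiTensorProduct Equiv MonoidAlgebra

variable {R K X V : Type*} [CommRing R] [Field K] [AddCommGroup V] [Module R V] [Module K V]

theorem map_smulRight_eq_dualDistrib_smulRight [Finite X] (ξ : X → Module.Dual R V) (u : X → V) :
    PiTensorProduct.map (fun x => (ξ x).smulRight (u x)) =
      (dualDistrib (R := R) (tprod R ξ)).smulRight (tprod R u) := by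
  have := Fintype.ofFinite X
  refine PiTensorProduct.ext (MultilinearMap.ext fun v => ?_)
  simp [MultilinearMap.map_smul_univ]

theorem span_range_map [Finite X] [Module.Free R V] [Module.Finite R V] :
    Submodule.span R (Set.range fun g : X → Module.End R V => PiTensorProduct.map g) = ⊤ := by
  classical
  have := Fintype.ofFinite X
  let b := Module.Free.chooseBasis R V
  let B := Basis.piTensorProduct (R := R) fun _ : X => b
  have coord_eq (i) : B.coord i = dualDistrib (R := R) (tprod R fun x => b.coord (i x)) := by
    refine PiTensorProduct.ext (MultilinearMap.ext fun v => ?_)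
    simp [B]
  have smulRight_mem (i) (u : ⨂[R] _ : X, V) : (B.coord i).smulRight u ∈
      Submodule.span R (Set.range fun g : X → Module.End R V => PiTensorProduct.map g) := by
    induction u using PiTensorProduct.induction_on with
    | smul_tprod k u =>
      have hmap := map_smulRight_eq_dualDistrib_smulRight (fun x => b.coord (i x)) u
      rw [← coord_eq] at hmap
      change LinearMap.smulRightₗ (B.coord i) _ ∈ _
      rw [map_smul]
      exact Submodule.smul_mem _ k (Submodule.subset_span ⟨_, hmap⟩)
    | add u v hu hv =>
      change LinearMap.smulRightₗ (B.coord i) _ ∈ _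
      rw [map_add]
      exact add_mem hu hv
  refine Submodule.eq_top_iff'.2 fun f => ?_
  have hf : f = ∑ i, (B.coord i).smulRight (f (B i)) := B.ext fun j => by
    simp [Finsupp.single_apply, ite_smul]
  exact hf ▸ sum_mem fun i _ => smulRight_mem i _

variable (R X V) in
/-- The representation of the permutations of `X` on `⨂ x : X, V` that moves the factor at `x` to
`σ x`. -/
noncomputable def permRep : Representation R (Perm X) (⨂[R] _ : X, V) where
  toFun σ := (PiTensorProduct.reindex R (fun _ => V) σ).toLinearMap
  map_one' := PiTensorProduct.ext (MultilinearMap.ext fun v => reindex_tprod 1 v)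
  map_mul' σ τ := PiTensorProduct.ext (MultilinearMap.ext fun v => by
    simp only [LinearMap.compMultilinearMap_apply, LinearEquiv.coe_coe, Module.End.mul_apply,
      reindex_tprod, Perm.mul_def, symm_trans_apply])

theorem permRep_tprod (σ : Perm X) (v : X → V) :
    permRep R X V σ (tprod R v) = tprod R fun x => v (σ⁻¹ x) :=
  reindex_tprod σ v

theorem permRep_map_permRep_inv (σ : Perm X) (g : X → Module.End R V) (w : ⨂[R] _ : X, V) :
    permRep R X V σ (PiTensorProduct.map g (permRep R X V σ⁻¹ w)) =
      PiTensorProduct.map (fun x => g (σ⁻¹ x)) w := by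
  induction w using PiTensorProduct.induction_on with
  | smul_tprod k v =>
    simp only [map_smul, permRep_tprod, PiTensorProduct.map_tprod]
    have inv_inv_apply (x : X) : σ⁻¹⁻¹ (σ⁻¹ x) = x := by simp
    exact congrArg (k • PiTensorProduct.tprod R ·)
      (funext fun x => congrArg (fun y => g (σ⁻¹ x) (v y)) (inv_inv_apply x))
  | add v w hv hw => simp only [map_add, hv, hw]

theorem sum_permRep_conj_mem [Fintype X] [DecidableEq X] [Infinite K] [FiniteDimensional K V]
    {W : Submodule K (⨂[K] _ : X, V)}
    (hW : ∀ g : V ≃ₗ[K] V, ∀ w ∈ W, PiTensorProduct.map (fun _ => g.toLinearMap) w ∈ W)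
    (f : Module.End K (⨂[K] _ : X, V)) {w : ⨂[K] _ : X, V} (hw : w ∈ W) :
    ∑ σ, permRep K X V σ (f (permRep K X V σ⁻¹ w)) ∈ W := by
  have hf : f ∈ Submodule.span K (Set.range fun g : X → Module.End K V => PiTensorProduct.map g) :=
    span_range_map (R := K) (X := X) (V := V) ▸ Submodule.mem_top
  induction hf using Submodule.span_induction with
  | mem f hf =>
    obtain ⟨g, rfl⟩ := hf
    simp only [permRep_map_permRep_inv]
    have hmem := sum_perm_map_comp_mem ((LinearMap.applyₗ w).compMultilinearMap
      (PiTensorProduct.mapMultilinear K (fun _ : X => V) fun _ => V)) (fun h => hW h w hw) g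
    rwa [← Equiv.sum_comp (Equiv.inv (Perm X))] at hmem
  | zero => simp
  | add f₁ f₂ _ _ h₁ h₂ => simpa [Finset.sum_add_distrib] using add_mem h₁ h₂
  | smul k f _ h => simpa [← Finset.smul_sum] using W.smul_mem k h

theorem dualDistrib_coord_permRep_tprod [Finite X] {ι : Type*} (b : Module.Basis ι R V)
    (r : X → ι) (σ : Perm X) [Decidable (σ ∈ fiberStabilizer r)] :
    dualDistrib (R := R) (tprod R fun x => b.coord (r x))
      (permRep R X V σ (tprod R fun x => b (r x))) = if σ ∈ fiberStabilizer r then 1 else 0 := by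
  classical
  have := Fintype.ofFinite X
  have mem_iff : σ ∈ fiberStabilizer r ↔ ∀ x, r (σ⁻¹ x) = r x := by
    rw [← inv_mem_iff, mem_fiberStabilizer]
  simp [permRep_tprod, Finsupp.single_apply, Fintype.prod_ite_zero, mem_iff]

variable [Fintype X] [DecidableEq X]

theorem asAlgebraHom_youngSymmetrizer_tprod_ne_zero [CharZero R] {ι κ : Type*}
    (b : Module.Basis ι R V) {r : X → ι} {c : X → κ}
    (hinj : Function.Injective fun x => (r x, c x)) :
    (permRep R X V).asAlgebraHom (youngSymmetrizer R r c) (tprod R fun x => b (r x)) ≠ 0 := by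
  classical
  intro hzero
  have hcard : ∑ σ : Perm X, (if σ ∈ fiberStabilizer r then (1 : R) else 0) = 0 := by
    calc ∑ σ : Perm X, (if σ ∈ fiberStabilizer r then (1 : R) else 0)
      _ = ∑ σ : Perm X, (youngSymmetrizer R r c).coeff σ *
            if σ ∈ fiberStabilizer r then 1 else 0 := by
          refine Finset.sum_congr rfl fun σ _ => ?_
          split_ifs with hσ
          · rw [coeff_youngSymmetrizer_of_mem_fiberStabilizer hinj hσ, mul_one]
          · rw [mul_zero]
      _ = dualDistrib (R := R) (tprod R fun x => b.coord (r x)) ((permRep R X V).asAlgebraHom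
            (youngSymmetrizer R r c) (tprod R fun x => b (r x))) := by
          rw [Representation.asAlgebraHom_def, lift_apply, Finsupp.sum_fintype _ _ (by simp)]
          simp only [LinearMap.sum_apply, LinearMap.smul_apply, map_sum, map_smul, smul_eq_mul,
            dualDistrib_coord_permRep_tprod]
      _ = 0 := by rw [hzero, map_zero]
  rw [Finset.sum_boole, Nat.cast_eq_zero, Finset.card_eq_zero] at hcard
  exact Finset.filter_eq_empty_iff.1 hcard (Finset.mem_univ 1) (one_mem _)

variable [CharZero K]

theorem asAlgebraHom_signedSum_sign_tprod_eq_zero {H : Subgroup (Perm X)} {x y : X} (hxy : x ≠ y)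
    (hswap : swap x y ∈ H) {v : X → V} (hv : v x = v y) :
    (permRep K X V).asAlgebraHom (signedSum K Perm.sign H) (tprod K v) = 0 := by
  have permRep_swap : permRep K X V (swap x y) (tprod K v) = tprod K v := by
    rw [permRep_tprod, swap_inv]
    congr 1
    ext z
    rw [swap_apply_def]
    split_ifs with hx hy
    · rw [hx, hv]
    · rw [hy, hv]
    · rfl
  have hneg : (permRep K X V).asAlgebraHom (signedSum K Perm.sign H) (tprod K v) =
      -(permRep K X V).asAlgebraHom (signedSum K Perm.sign H) (tprod K v) := by
    conv_lhs => rw [← permRep_swap, ← Representation.asAlgebraHom_single_one,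
      ← Module.End.mul_apply, ← map_mul, signedSum_mul_single hswap, Perm.sign_swap hxy]
    simp
  have := IsAddTorsionFree.of_module_rat
  exact self_eq_neg.1 hneg

theorem asAlgebraHom_signedSum_sign_fiberStabilizer_eq_zero [FiniteDimensional K V] {κ : Type*}
    {c : X → κ} {s : Finset X} (hs : ∀ x ∈ s, ∀ y ∈ s, c x = c y)
    (hcard : Module.finrank K V < s.card) :
    (permRep K X V).asAlgebraHom (signedSum K Perm.sign (fiberStabilizer c)) = 0 := by
  let b := Module.finBasis K V
  refine (Basis.piTensorProduct fun _ : X => b).ext fun i => ?_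
  obtain ⟨x, hx, y, hy, hxy, hi⟩ := Finset.exists_ne_map_eq_of_card_lt_of_maps_to
    (s := s) (t := Finset.univ) (f := i) (by simpa using hcard) (by simp)
  rw [Basis.piTensorProduct_apply]
  exact asAlgebraHom_signedSum_sign_tprod_eq_zero hxy
    (swap_mem_fiberStabilizer (hs x hx y hy)) (congrArg b hi)

end TensorPower

section Cells

open Equiv

variable {K V : Type*} [Field K] [AddCommGroup V] [Module K V] {N : ℕ} {μ : ℕ → ℕ}

theorem injective_row_col {ι : Type*} {r : YCells N μ → ι}
    (hr : ∀ x y, r x = r y ↔ x.1.1 = y.1.1) :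
    Function.Injective fun x : YCells N μ => (r x, (x.1.2 : ℕ)) := fun x y hxy =>
  Subtype.ext (Prod.ext ((hr x y).1 (congrArg Prod.fst hxy)) (Fin.ext (congrArg Prod.snd hxy)))

theorem exists_row_eq_col_eq_of_lt (x : YCells N μ) {j : ℕ} (hj : j < x.1.2) :
    ∃ y : YCells N μ, y.1.1 = x.1.1 ∧ (y.1.2 : ℕ) = j :=
  ⟨⟨(x.1.1, ⟨j, hj.trans x.1.2.2⟩), hj.trans x.2⟩, rfl, rfl⟩

theorem asAlgebraHom_signedSum_one_row {ι : Type*} {r : YCells N μ → ι}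
    (hr : ∀ x y, r x = r y ↔ x.1.1 = y.1.1) :
    (permRep K (YCells N μ) V).asAlgebraHom (signedSum K 1 (fiberStabilizer r)) =
      rowSymm K N μ := by
  classical
  rw [asAlgebraHom_signedSum, rowSymm]
  refine Finset.sum_congr (by ext σ; simp [mem_fiberStabilizer, hr]) fun σ _ => ?_
  rw [MonoidHom.one_apply, Units.val_one, Int.cast_one, one_smul]
  rfl

theorem asAlgebraHom_signedSum_sign_col :
    (permRep K (YCells N μ) V).asAlgebraHom
      (signedSum K Perm.sign (fiberStabilizer fun x => (x.1.2 : ℕ))) = colAntisymm K N μ := by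
  classical
  rw [asAlgebraHom_signedSum, colAntisymm]
  exact Finset.sum_congr (by ext σ; simp [mem_fiberStabilizer, Fin.ext_iff]) fun _ _ => rfl

theorem range_asAlgebraHom_youngSymmetrizer {ι : Type*} {r : YCells N μ → ι}
    (hr : ∀ x y, r x = r y ↔ x.1.1 = y.1.1) :
    LinearMap.range ((permRep K (YCells N μ) V).asAlgebraHom
      (youngSymmetrizer K r fun x => (x.1.2 : ℕ))) = schurMod K N μ := by
  rw [youngSymmetrizer, map_mul, asAlgebraHom_signedSum_one_row hr, asAlgebraHom_signedSum_sign_col]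
  rfl

variable [CharZero K] [FiniteDimensional K V]

theorem schurMod_ne_bot (hanti : Antitone μ) (hμ : μ (Module.finrank K V) = 0) :
    schurMod K N μ (V := V) ≠ ⊥ := by
  have row_lt (x : YCells N μ) : (x.1.1 : ℕ) < Module.finrank K V := by
    by_contra! hle
    exact (x.2.trans_le (hanti hle)).not_ge (hμ ▸ Nat.zero_le _)
  let r (x : YCells N μ) : Fin (Module.finrank K V) := ⟨x.1.1, row_lt x⟩
  have hr (x y : YCells N μ) : r x = r y ↔ x.1.1 = y.1.1 := by simp [r, Fin.ext_iff]
  rw [← range_asAlgebraHom_youngSymmetrizer hr, Ne, LinearMap.range_eq_bot]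
  exact fun hzero => asAlgebraHom_youngSymmetrizer_tprod_ne_zero (Module.finBasis K V)
    (injective_row_col hr) (by rw [hzero, LinearMap.zero_apply])

theorem eq_bot_or_eq_schurMod {W : Submodule K (TPow K V N μ)} (hWle : W ≤ schurMod K N μ)
    (hW : ∀ g : V ≃ₗ[K] V, ∀ w ∈ W, tmapC K N μ g.toLinearMap w ∈ W) :
    W = ⊥ ∨ W = schurMod K N μ := by
  have hr (x y : YCells N μ) : x.1.1 = y.1.1 ↔ x.1.1 = y.1.1 := Iff.rfl
  rw [← range_asAlgebraHom_youngSymmetrizer hr] at hWle ⊢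
  exact eq_bot_or_eq_range_asAlgebraHom _ (coeff_one_youngSymmetrizer (injective_row_col hr))
    (youngSymmetrizer_mul_mul_youngSymmetrizer (injective_row_col hr)
      fun x _ hj => exists_row_eq_col_eq_of_lt x hj)
    hWle fun f w hw => sum_permRep_conj_mem hW f hw

theorem schurMod_eq_bot (hanti : Antitone μ) (hμN : μ N = 0) (hμ : 0 < μ (Module.finrank K V)) :
    schurMod K N μ (V := V) = ⊥ := by
  have hlt : Module.finrank K V < N := by
    by_contra! hle
    exact (hμ.trans_le (hanti hle)).ne' hμN
  let firstCol (i : Fin (Module.finrank K V + 1)) : YCells N μ :=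
    ⟨(i.castLE hlt, ⟨0, by omega⟩), hμ.trans_le (hanti i.is_le)⟩
  have injective_firstCol : Function.Injective firstCol := fun i j hij =>
    Fin.castLE_injective hlt (congrArg (fun x => x.1.1) hij)
  have hcol : colAntisymm K N μ (V := V) = 0 := by
    rw [← asAlgebraHom_signedSum_sign_col]
    refine asAlgebraHom_signedSum_sign_fiberStabilizer_eq_zero
      (s := Finset.univ.map ⟨firstCol, injective_firstCol⟩) ?_ (by simp)
    simp [firstCol]
  rw [schurMod, youngSymm, hcol, LinearMap.comp_zero, LinearMap.range_zero]

end Cells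

end SchurModule

/-- Let `λ` be a partition of `N` (encoded by an antitone `μ : ℕ → ℕ` with `μ N = 0` and
`∑_{i<N} μ i = N`) and let `V` be an `n`-dimensional vector space over a field of
characteristic `0`.  If `λ` has at most `n` rows (i.e. `μ n = 0`), then the `GL(V)`-module
`S_λ V = V^{⊗N}·c_λ` is nonzero and irreducible; if `λ` has more than `n` rows
(i.e. `μ n > 0`), then `S_λ V = 0`. -/
theorem stmt13 {K : Type*} [Field K] [CharZero K]
    (V : Type*) [AddCommGroup V] [Module K V] [FiniteDimensional K V]
    (n : ℕ) (hdim : Module.finrank K V = n)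
    (N : ℕ) (μ : ℕ → ℕ) (hanti : Antitone μ) (hμN : μ N = 0)
    (hsum : ∑ i ∈ Finset.range N, μ i = N) :
    (μ n = 0 →
      schurMod K N μ (V := V) ≠ ⊥ ∧
      ∀ W : Submodule K (TPow K V N μ), W ≤ schurMod K N μ (V := V) →
        (∀ g : V ≃ₗ[K] V, ∀ x ∈ W, tmapC K N μ g.toLinearMap x ∈ W) →
        W = ⊥ ∨ W = schurMod K N μ (V := V)) ∧
    (0 < μ n → schurMod K N μ (V := V) = ⊥) := by
  subst hdim
  exact ⟨fun hμ => ⟨SchurModule.schurMod_ne_bot hanti hμ,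
    fun _ hWle hW => SchurModule.eq_bot_or_eq_schurMod hWle hW⟩,
    SchurModule.schurMod_eq_bot hanti hμN⟩
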